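/- arXiv:2008.10430 — 2 statements merged into one kernel-verified Lean document; each statement's English description precedes it below -/
import Mathlib

section
/- Fix α ∈ [0,1]. (1) If G₁ and G₂ are A_α-cospectral regular graphs and H is an arbitrary graph, then the subdivision-edge joins G₁ ∨̲ H and G₂ ∨̲ H are A_α-cospectral. (2) If H₁ and H₂ are A_α-cospectral graphs with equal A_α-coronals Γ_{A_α(H₁)}(x) = Γ_{A_α(H₂)}(x), and G is a regular graph, then G ∨̲ H₁ and G ∨̲ H₂ are A_α-cospectral. -/
open Matrix Polynomial
open scoped Classical

noncomputable section

/-- `A_α(G) = α·D(G) + (1-α)·A(G)`, where `D(G)` is the diagonal degree matrix and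
`A(G)` the adjacency matrix. -/
def Aalpha {V : Type*} [Fintype V] (G : SimpleGraph V) (α : ℝ) : Matrix V V ℝ :=
  α • Matrix.diagonal (fun v => (G.degree v : ℝ)) + (1 - α) • G.adjMatrix ℝ

/-- The `M`-coronal `Γ_M(x) = 1ᵀ (xI − M)⁻¹ 1`, i.e. the sum of the entries of
`(xI − M)⁻¹`. -/
def coronal {n : Type*} [Fintype n] (M : Matrix n n ℝ) (x : ℝ) : ℝ :=
  ∑ i, ∑ j, (x • (1 : Matrix n n ℝ) - M)⁻¹ i j

/-- The subdivision-edge join `G₁ ∨̲ G₂`: take the subdivision graph `S(G₁)` (a new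
vertex inserted in each edge of `G₁`) together with `G₂`, and join every inserted
vertex of `S(G₁)` with every vertex of `G₂`. -/
def subdivisionEdgeJoin {V₁ V₂ : Type*} (G₁ : SimpleGraph V₁) (G₂ : SimpleGraph V₂) :
    SimpleGraph (V₁ ⊕ (↥G₁.edgeSet ⊕ V₂)) :=
  SimpleGraph.fromRel fun a b =>
    match a, b with
    | Sum.inl v, Sum.inr (Sum.inl e) => v ∈ (e : Sym2 V₁)
    | Sum.inr (Sum.inl _), Sum.inr (Sum.inr _) => True
    | Sum.inr (Sum.inr u), Sum.inr (Sum.inr w) => G₂.Adj u w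
    | _, _ => False

/-- The vertex-edge incidence matrix of `G`, with columns indexed by the edges of `G`. -/
def edgeIncidence {V : Type*} (G : SimpleGraph V) : Matrix V G.edgeSet ℝ :=
  fun v e => if v ∈ (e : Sym2 V) then 1 else 0

lemma edgeIncidence_eq_incMatrix {V : Type*} [DecidableEq V] (G : SimpleGraph V) (v : V)
    (e : G.edgeSet) : edgeIncidence G v e = G.incMatrix ℝ v e := by
  simp [edgeIncidence, SimpleGraph.incMatrix_apply', SimpleGraph.incidenceSet, e.2]

lemma sum_edgeSet_eq_sum_sym2 {V : Type*} [Fintype V] (G : SimpleGraph V) [Fintype G.edgeSet]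
    (f : Sym2 V → ℝ) (hf : ∀ e ∉ G.edgeSet, f e = 0) :
    ∑ e : G.edgeSet, f e = ∑ e, f e := by
  rw [← Finset.sum_subset (Finset.subset_univ G.edgeFinset)
    (fun e _ he => hf e (by simpa using he))]
  exact (Finset.sum_subtype G.edgeFinset (fun e => by simp) f).symm

lemma sum_edgeIncidence_row {V : Type*} [Fintype V] (G : SimpleGraph V) [Fintype G.edgeSet]
    (v : V) : ∑ e, edgeIncidence G v e = G.degree v := by
  simp_rw [edgeIncidence_eq_incMatrix]
  rw [sum_edgeSet_eq_sum_sym2 G (fun e => G.incMatrix ℝ v e)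
    (fun e he => G.incMatrix_of_notMem_incidenceSet fun h => he h.1)]
  exact G.sum_incMatrix_apply

lemma sum_edgeIncidence_col {V : Type*} [Fintype V] (G : SimpleGraph V) (e : G.edgeSet) :
    ∑ v, edgeIncidence G v e = 2 := by
  simp_rw [edgeIncidence_eq_incMatrix]
  exact G.sum_incMatrix_apply_of_mem_edgeSet e.2

lemma edgeIncidence_mul_transpose {V : Type*} [Fintype V] [DecidableEq V] (G : SimpleGraph V)
    [Fintype G.edgeSet] :
    edgeIncidence G * (edgeIncidence G)ᵀ =
      diagonal (fun v => (G.degree v : ℝ)) + G.adjMatrix ℝ := by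
  ext v w
  have h := congrFun (congrFun (G.incMatrix_mul_transpose (R := ℝ)) v) w
  rw [mul_apply] at h ⊢
  simp_rw [transpose_apply, edgeIncidence_eq_incMatrix] at h ⊢
  rw [sum_edgeSet_eq_sum_sym2 G (fun e => G.incMatrix ℝ v e * G.incMatrix ℝ w e)
    (fun e he => by simp [G.incMatrix_of_notMem_incidenceSet (R := ℝ) (a := v) fun h => he h.1])]
  rw [h]
  by_cases hvw : v = w
  · subst hvw
    simp
  · simp [hvw, SimpleGraph.adjMatrix_apply]

section Join

variable {V W : Type*} (G : SimpleGraph V) (H : SimpleGraph W)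

@[simp] lemma subdivisionEdgeJoin_adj_vertex_vertex (v w : V) :
    ¬(subdivisionEdgeJoin G H).Adj (Sum.inl v) (Sum.inl w) := by
  simp [subdivisionEdgeJoin]

@[simp] lemma subdivisionEdgeJoin_adj_vertex_edge (v : V) (e : G.edgeSet) :
    (subdivisionEdgeJoin G H).Adj (Sum.inl v) (Sum.inr (Sum.inl e)) ↔ v ∈ (e : Sym2 V) := by
  simp [subdivisionEdgeJoin]

@[simp] lemma subdivisionEdgeJoin_adj_edge_vertex (v : V) (e : G.edgeSet) :
    (subdivisionEdgeJoin G H).Adj (Sum.inr (Sum.inl e)) (Sum.inl v) ↔ v ∈ (e : Sym2 V) := by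
  simp [subdivisionEdgeJoin]

@[simp] lemma subdivisionEdgeJoin_adj_vertex_right (v : V) (u : W) :
    ¬(subdivisionEdgeJoin G H).Adj (Sum.inl v) (Sum.inr (Sum.inr u)) := by
  simp [subdivisionEdgeJoin]

@[simp] lemma subdivisionEdgeJoin_adj_right_vertex (v : V) (u : W) :
    ¬(subdivisionEdgeJoin G H).Adj (Sum.inr (Sum.inr u)) (Sum.inl v) := by
  simp [subdivisionEdgeJoin]

@[simp] lemma subdivisionEdgeJoin_adj_edge_edge (e f : G.edgeSet) :
    ¬(subdivisionEdgeJoin G H).Adj (Sum.inr (Sum.inl e)) (Sum.inr (Sum.inl f)) := by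
  simp [subdivisionEdgeJoin]

@[simp] lemma subdivisionEdgeJoin_adj_edge_right (e : G.edgeSet) (u : W) :
    (subdivisionEdgeJoin G H).Adj (Sum.inr (Sum.inl e)) (Sum.inr (Sum.inr u)) := by
  simp [subdivisionEdgeJoin]

@[simp] lemma subdivisionEdgeJoin_adj_right_edge (e : G.edgeSet) (u : W) :
    (subdivisionEdgeJoin G H).Adj (Sum.inr (Sum.inr u)) (Sum.inr (Sum.inl e)) := by
  simp [subdivisionEdgeJoin]

@[simp] lemma subdivisionEdgeJoin_adj_right_right (u w : W) :
    (subdivisionEdgeJoin G H).Adj (Sum.inr (Sum.inr u)) (Sum.inr (Sum.inr w)) ↔ H.Adj u w := by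
  simp only [subdivisionEdgeJoin, SimpleGraph.fromRel_adj, H.adj_comm w u, or_self, ne_eq,
    Sum.inr.injEq, and_iff_right_iff_imp]
  exact fun h => h.ne

variable [Fintype V] [Fintype W] [Fintype G.edgeSet]

lemma cast_degree_eq_sum {U : Type*} [Fintype U] (K : SimpleGraph U) (u : U) :
    (K.degree u : ℝ) = ∑ w, if K.Adj u w then 1 else 0 := by
  rw [← K.card_neighborFinset_eq_degree, K.neighborFinset_eq_filter, Finset.sum_boole]

lemma degree_subdivisionEdgeJoin_vertex (v : V) :
    ((subdivisionEdgeJoin G H).degree (Sum.inl v) : ℝ) = G.degree v := by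
  rw [cast_degree_eq_sum, ← sum_edgeIncidence_row, Fintype.sum_sum_type, Fintype.sum_sum_type]
  simp [edgeIncidence]

lemma degree_subdivisionEdgeJoin_edge (e : G.edgeSet) :
    ((subdivisionEdgeJoin G H).degree (Sum.inr (Sum.inl e)) : ℝ) = 2 + Fintype.card W := by
  rw [cast_degree_eq_sum, ← sum_edgeIncidence_col G e, Fintype.sum_sum_type,
    Fintype.sum_sum_type]
  simp [edgeIncidence]

lemma degree_subdivisionEdgeJoin_right (u : W) :
    ((subdivisionEdgeJoin G H).degree (Sum.inr (Sum.inr u)) : ℝ) =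
      Fintype.card G.edgeSet + H.degree u := by
  rw [cast_degree_eq_sum, cast_degree_eq_sum, Fintype.sum_sum_type, Fintype.sum_sum_type]
  simp

end Join

/-- The equivalence moving the middle summand to the front. -/
def sumMiddleFirst (A B C : Type*) : B ⊕ (A ⊕ C) ≃ A ⊕ (B ⊕ C) where
  toFun := Sum.elim (fun b => Sum.inr (Sum.inl b))
    (Sum.elim Sum.inl fun c => Sum.inr (Sum.inr c))
  invFun := Sum.elim (fun a => Sum.inr (Sum.inl a))
    (Sum.elim Sum.inl fun c => Sum.inr (Sum.inr c))
  left_inv := by rintro (b | a | c) <;> rfl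
  right_inv := by rintro (a | b | c) <;> rfl

/-- The block form of `xI - A_α` for a subdivision-edge join, with the edge block first. -/
lemma smul_one_sub_Aalpha_subdivisionEdgeJoin {V W : Type*} [Fintype V] [DecidableEq V]
    [Fintype W] [DecidableEq W] (G : SimpleGraph V) [Fintype G.edgeSet] (H : SimpleGraph W)
    {r : ℕ} (hG : G.IsRegularOfDegree r) (α x : ℝ) :
    (x • (1 : Matrix (V ⊕ (G.edgeSet ⊕ W)) (V ⊕ (G.edgeSet ⊕ W)) ℝ)
        - Aalpha (subdivisionEdgeJoin G H) α).submatrix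
        (sumMiddleFirst V G.edgeSet W) (sumMiddleFirst V G.edgeSet W) =
      fromBlocks ((x - α * (2 + Fintype.card W)) • (1 : Matrix G.edgeSet G.edgeSet ℝ))
        (fromCols (-(1 - α) • (edgeIncidence G)ᵀ) (of fun _ _ => -(1 - α)))
        (fromRows (-(1 - α) • edgeIncidence G) (of fun _ _ => -(1 - α)))
        (fromBlocks ((x - α * r) • 1) 0 0
          ((x - α * Fintype.card G.edgeSet) • 1 - Aalpha H α)) := by
  ext i j
  rcases i with e | v | u <;> rcases j with f | w | u'
  all_goals
    simp [sumMiddleFirst, Aalpha, edgeIncidence, one_apply, diagonal_apply,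
      degree_subdivisionEdgeJoin_vertex, degree_subdivisionEdgeJoin_edge,
      degree_subdivisionEdgeJoin_right, hG.degree_eq, SimpleGraph.adjMatrix_apply]
  all_goals (split_ifs <;> ring)

/-- Schur complement for a matrix whose off-diagonal blocks are constant and whose first diagonal
block has constant row sums. -/
lemma det_fromBlocks_const_of_sum_row_eq {V W : Type*} [Fintype V] [DecidableEq V]
    [Fintype W] [DecidableEq W] (P : Matrix V V ℝ) (Q : Matrix W W ℝ) (s t : ℝ) (ht : t ≠ 0)
    (hP : ∀ v, ∑ w, P v w = t) :
    (fromBlocks P (of fun _ _ => s) (of fun _ _ => s) Q).det =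
      P.det * (Q - (s ^ 2 * Fintype.card V / t) • of fun _ _ => 1).det := by
  have h : fromBlocks P (of fun _ _ => s) (of fun _ _ => s) Q *
      fromBlocks 1 (of fun _ _ => -(s / t)) 0 1 =
      fromBlocks P 0 (of fun _ _ => s) (Q - (s ^ 2 * Fintype.card V / t) • of fun _ _ => 1) := by
    rw [fromBlocks_multiply]
    congr 1
    · simp
    · ext v u
      simp only [Matrix.mul_one, Matrix.add_apply, mul_apply, of_apply, Matrix.zero_apply]
      rw [← Finset.sum_mul, hP]
      field_simp
      ring
    · simp
    · ext u w
      simp [mul_apply]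
      ring
  have h' := congrArg det h
  rwa [det_mul, det_fromBlocks_zero₂₁, det_fromBlocks_zero₁₂, det_one, det_one, mul_one,
    mul_one] at h'

lemma card_mul_degree_eq_two_mul_card_edges {V : Type*} [Fintype V] (G : SimpleGraph V)
    [Fintype G.edgeSet] {r : ℕ} (hG : G.IsRegularOfDegree r) :
    (Fintype.card V : ℝ) * r = 2 * Fintype.card G.edgeSet := by
  have h := Finset.sum_comm (s := Finset.univ) (t := Finset.univ) (f := edgeIncidence G)
  simp only [sum_edgeIncidence_row, sum_edgeIncidence_col, hG.degree_eq, Finset.sum_const,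
    Finset.card_univ, nsmul_eq_mul] at h
  rw [h, mul_comm]

lemma det_smul_one_sub_Aalpha_subdivisionEdgeJoin {V W : Type*} [Fintype V] [DecidableEq V]
    [Fintype W] [DecidableEq W] (G : SimpleGraph V) [Fintype G.edgeSet] (H : SimpleGraph W)
    {r : ℕ} (hG : G.IsRegularOfDegree r) (α x a c t : ℝ)
    (ha : a = x - α * (2 + Fintype.card W)) (hc : c = (1 - α) ^ 2 / a)
    (ht : t = x - α * r - 2 * c * r) (ha0 : a ≠ 0) (ht0 : t ≠ 0) :
    (x • (1 : Matrix (V ⊕ (G.edgeSet ⊕ W)) (V ⊕ (G.edgeSet ⊕ W)) ℝ)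
        - Aalpha (subdivisionEdgeJoin G H) α).det =
      a ^ Fintype.card G.edgeSet * (((x - α * r - c * r) • 1 - c • G.adjMatrix ℝ).det *
        ((x - α * Fintype.card G.edgeSet) • 1 - Aalpha H α -
          (c * Fintype.card G.edgeSet + (c * r) ^ 2 * Fintype.card V / t) •
            of fun _ _ => 1).det) := by
  let _ : Invertible (a • (1 : Matrix G.edgeSet G.edgeSet ℝ)) :=
    ⟨a⁻¹ • 1, by simp [smul_smul, ha0], by simp [smul_smul, ha0]⟩
  have hinv : ⅟(a • (1 : Matrix G.edgeSet G.edgeSet ℝ)) = a⁻¹ • 1 := rfl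
  rw [← det_submatrix_equiv_self (sumMiddleFirst V G.edgeSet W),
    smul_one_sub_Aalpha_subdivisionEdgeJoin G H hG, ← ha, det_fromBlocks₁₁, hinv, det_smul,
    det_one, mul_one]
  congr 1
  have hRR := edgeIncidence_mul_transpose G
  have hschur : fromBlocks ((x - α * r) • (1 : Matrix V V ℝ)) 0 0
          ((x - α * Fintype.card G.edgeSet) • 1 - Aalpha H α) -
        fromRows (-(1 - α) • edgeIncidence G) (of fun _ _ => -(1 - α)) *
          a⁻¹ • (1 : Matrix G.edgeSet G.edgeSet ℝ) *
          fromCols (-(1 - α) • (edgeIncidence G)ᵀ) (of fun _ _ => -(1 - α)) =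
      fromBlocks ((x - α * r - c * r) • 1 - c • G.adjMatrix ℝ) (of fun _ _ => -(c * r))
        (of fun _ _ => -(c * r))
        ((x - α * Fintype.card G.edgeSet) • 1 - Aalpha H α -
          (c * Fintype.card G.edgeSet) • of fun _ _ => 1) := by
    rw [Matrix.mul_smul, Matrix.mul_one, Matrix.smul_mul, fromRows_mul_fromCols, sub_eq_add_neg,
      fromBlocks_smul, fromBlocks_neg, fromBlocks_add]
    congr 1
    · rw [Matrix.smul_mul, Matrix.mul_smul, hRR]
      ext v w
      by_cases hvw : v = w <;> simp [hvw, hG.degree_eq, hc] <;> ring_nf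
    · ext v u
      simp only [Matrix.add_apply, Matrix.zero_apply, Matrix.neg_apply, Matrix.smul_apply,
        mul_apply, of_apply, smul_eq_mul]
      rw [← Finset.sum_mul, ← Finset.mul_sum, sum_edgeIncidence_row, hG.degree_eq, hc]
      ring
    · ext u v
      simp only [Matrix.add_apply, Matrix.zero_apply, Matrix.neg_apply, Matrix.smul_apply,
        mul_apply, of_apply, smul_eq_mul,
        transpose_apply]
      rw [← Finset.mul_sum, ← Finset.mul_sum, sum_edgeIncidence_row, hG.degree_eq, hc]
      ring
    · ext u w
      simp only [Matrix.add_apply, Matrix.sub_apply, Matrix.neg_apply, Matrix.smul_apply,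
        mul_apply, of_apply, smul_eq_mul,
        Finset.sum_const, Finset.card_univ, nsmul_eq_mul, hc]
      ring
  rw [hschur, det_fromBlocks_const_of_sum_row_eq (t := t) (ht := ht0), sub_sub _ _ (_ • _),
    ← add_smul, neg_sq]
  intro v
  simp only [Matrix.sub_apply, Matrix.smul_apply, Finset.sum_sub_distrib, smul_eq_mul,
    ← Finset.mul_sum, SimpleGraph.adjMatrix_apply, ← cast_degree_eq_sum, hG.degree_eq, one_apply, ht,
    Finset.sum_ite_eq, Finset.mem_univ, if_true]
  ring

lemma eval_charpoly_eq_det_smul {n : Type*} [Fintype n] [DecidableEq n] (M : Matrix n n ℝ)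
    (x : ℝ) : M.charpoly.eval x = (x • 1 - M).det := by
  rw [Matrix.eval_charpoly, Matrix.scalar_apply, ← Matrix.smul_one_eq_diagonal]

lemma det_smul_one_sub_smul_eq_of_charpoly_eq {n : Type*} [Fintype n] [DecidableEq n]
    {M N : Matrix n n ℝ} (h : M.charpoly = N.charpoly) (p s : ℝ) :
    (p • 1 - s • M).det = (p • 1 - s • N).det := by
  rcases eq_or_ne s 0 with rfl | hs
  · simp
  · have key : ∀ K : Matrix n n ℝ,
        (p • 1 - s • K).det = s ^ Fintype.card n * K.charpoly.eval (p / s) := by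
      intro K
      rw [eval_charpoly_eq_det_smul, ← det_smul, smul_sub, smul_smul, mul_div_cancel₀ _ hs]
    rw [key, key, h]

lemma det_sub_smul_const {n : Type*} [Fintype n] [DecidableEq n] (M : Matrix n n ℝ) (y e : ℝ)
    (hy : (y • 1 - M).det ≠ 0) :
    (y • 1 - M - e • of fun _ _ => 1).det = (y • 1 - M).det * (1 - e * coronal M y) := by
  have h := det_add_replicateCol_mul_replicateRow (ι := Unit) (A := y • 1 - M)
    (isUnit_iff_ne_zero.mpr hy) (fun _ => -e) (fun _ => 1)
  have hJ : replicateCol Unit (fun _ : n => -e) * replicateRow Unit (fun _ : n => (1 : ℝ)) =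
      -(e • of fun _ _ => 1) := by
    ext i j
    simp [mul_apply]
  rw [hJ, ← sub_eq_add_neg] at h
  rw [h, det_unique (n := Unit)]
  congr 1
  simp only [Matrix.add_apply, one_apply_eq, mul_apply, replicateRow_apply, replicateCol_apply,
    one_mul, coronal]
  rw [← Finset.sum_mul, Finset.sum_comm, mul_neg, ← sub_eq_add_neg, mul_comm e]
  congr!

lemma charpoly_eq_of_det_eq_of_eval_ne_zero {m n : Type*} [Fintype m] [DecidableEq m] [Fintype n]
    [DecidableEq n] {M : Matrix m m ℝ} {N : Matrix n n ℝ} (q : ℝ[X]) (hq : q ≠ 0)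
    (h : ∀ x, q.eval x ≠ 0 → (x • 1 - M).det = (x • 1 - N).det) : M.charpoly = N.charpoly := by
  refine Polynomial.eq_of_infinite_eval_eq _ _ ?_
  refine (Set.Finite.infinite_compl (s := {x | q.IsRoot x}) (finite_setOfPred_isRoot hq)).mono ?_
  intro x hx
  simp only [Set.mem_ofPred_eq, eval_charpoly_eq_det_smul]
  exact h x hx

lemma sum_Aalpha_row {V : Type*} [Fintype V] (G : SimpleGraph V) (α : ℝ) (v : V) :
    ∑ w, Aalpha G α v w = G.degree v := by
  simp only [Aalpha, Matrix.add_apply, Matrix.smul_apply, smul_eq_mul, Finset.sum_add_distrib,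
    ← Finset.mul_sum, diagonal_apply, SimpleGraph.adjMatrix_apply, ← cast_degree_eq_sum,
    Finset.sum_ite_eq, Finset.mem_univ, if_true]
  ring

lemma eval_charpoly_Aalpha_degree {V : Type*} [Fintype V] [DecidableEq V] [Nonempty V]
    (G : SimpleGraph V) {r : ℕ} (hG : G.IsRegularOfDegree r) (α : ℝ) :
    (Aalpha G α).charpoly.eval (r : ℝ) = 0 := by
  rw [eval_charpoly_eq_det_smul, ← Matrix.exists_mulVec_eq_zero_iff]
  refine ⟨fun _ => 1, fun h => one_ne_zero (congrFun h (Classical.arbitrary V)), ?_⟩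
  ext v
  simp only [mulVec, dotProduct, Matrix.sub_apply, Matrix.smul_apply, smul_eq_mul, mul_one,
    Finset.sum_sub_distrib, sum_Aalpha_row, ← Finset.mul_sum, hG.degree_eq, one_apply,
    Finset.sum_ite_eq, Finset.mem_univ, if_true, Pi.zero_apply, sub_self]

lemma le_degree_of_eval_charpoly_Aalpha {V : Type*} [Fintype V] [DecidableEq V]
    (G : SimpleGraph V) {r : ℕ} (hG : G.IsRegularOfDegree r) {α : ℝ} (hα : α ≤ 1) {μ : ℝ}
    (hμ : (Aalpha G α).charpoly.eval μ = 0) : μ ≤ r := by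
  have h : Module.End.HasEigenvalue (Matrix.toLin' (Aalpha G α)) μ := by
    rw [Module.End.hasEigenvalue_iff_isRoot_charpoly]
    simpa [Polynomial.IsRoot] using hμ
  obtain ⟨v, hv⟩ := eigenvalue_mem_ball h
  rw [Metric.mem_closedBall, Real.dist_eq] at hv
  have hdiag : Aalpha G α v v = α * r := by simp [Aalpha, hG.degree_eq]
  have hsum : ∑ w ∈ Finset.univ.erase v, ‖Aalpha G α v w‖ ≤ (1 - α) * r := by
    calc ∑ w ∈ Finset.univ.erase v, ‖Aalpha G α v w‖
        = ∑ w ∈ Finset.univ.erase v, (1 - α) * (if G.Adj v w then 1 else 0) := by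
          refine Finset.sum_congr rfl fun w hw => ?_
          have hvw : v ≠ w := (Finset.ne_of_mem_erase hw).symm
          have : Aalpha G α v w = (1 - α) * (if G.Adj v w then 1 else 0) := by
            simp [Aalpha, hvw, SimpleGraph.adjMatrix_apply]
          rw [this, Real.norm_of_nonneg]
          exact mul_nonneg (by linarith) (by split_ifs <;> norm_num)
      _ ≤ ∑ w, (1 - α) * (if G.Adj v w then 1 else 0) :=
          Finset.sum_le_sum_of_subset_of_nonneg (Finset.subset_univ _) fun w _ _ =>
            mul_nonneg (by linarith) (by split_ifs <;> norm_num)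
      _ = (1 - α) * r := by rw [← Finset.mul_sum, ← cast_degree_eq_sum, hG.degree_eq]
  have := (le_abs_self _).trans (hv.trans hsum)
  rw [hdiag] at this
  linarith

lemma degree_eq_of_Aalpha_charpoly_eq {V W : Type*} [Fintype V] [DecidableEq V] [Nonempty V]
    [Fintype W] [DecidableEq W] [Nonempty W] {G : SimpleGraph V} {H : SimpleGraph W} {r s : ℕ}
    (hG : G.IsRegularOfDegree r) (hH : H.IsRegularOfDegree s) {α : ℝ} (hα : α ≤ 1)
    (h : (Aalpha G α).charpoly = (Aalpha H α).charpoly) : r = s := by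
  have h₁ := le_degree_of_eval_charpoly_Aalpha H hH hα (h ▸ eval_charpoly_Aalpha_degree G hG α)
  have h₂ := le_degree_of_eval_charpoly_Aalpha G hG hα (h ▸ eval_charpoly_Aalpha_degree H hH α)
  exact le_antisymm (mod_cast h₁) (mod_cast h₂)

lemma eq_of_charpoly_eq_fin {m n : ℕ} {M : Matrix (Fin m) (Fin m) ℝ}
    {N : Matrix (Fin n) (Fin n) ℝ} (h : M.charpoly = N.charpoly) : m = n := by
  simpa using congrArg natDegree h

lemma smul_one_sub_smul_adjMatrix_eq {V : Type*} [Fintype V] [DecidableEq V]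
    (G : SimpleGraph V) {r : ℕ} (hG : G.IsRegularOfDegree r) (α a p : ℝ) :
    p • 1 - ((1 - α) ^ 2 / a) • G.adjMatrix ℝ =
      (p + (1 - α) / a * (α * r)) • 1 - ((1 - α) / a) • Aalpha G α := by
  ext v w
  by_cases hvw : v = w <;> simp [hvw, Aalpha, hG.degree_eq]
  split_ifs <;> ring

/-- A polynomial that is nonzero at every `x` where both Schur complements exist. -/
def nondegeneracyPoly (α b r : ℝ) : ℝ[X] :=
  (X - C b) * ((X - C (α * r)) * (X - C b) - C (2 * (1 - α) ^ 2 * r))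

lemma nondegeneracyPoly_ne_zero (α b r : ℝ) : nondegeneracyPoly α b r ≠ 0 := by
  refine mul_ne_zero (X_sub_C_ne_zero _) fun h => ?_
  have h2 := congrArg natDegree h
  rw [natDegree_sub_C, natDegree_mul (X_sub_C_ne_zero _) (X_sub_C_ne_zero _)] at h2
  simp at h2

lemma ne_zero_of_eval_nondegeneracyPoly {α b r x : ℝ}
    (h : (nondegeneracyPoly α b r).eval x ≠ 0) :
    x - b ≠ 0 ∧ x - α * r - 2 * ((1 - α) ^ 2 / (x - b)) * r ≠ 0 := by
  simp only [nondegeneracyPoly, eval_mul, eval_sub, eval_X, eval_C, mul_ne_zero_iff] at h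
  refine ⟨h.1, fun h0 => h.2 ?_⟩
  have := h.1
  field_simp at h0
  linarith

/-- Corollary: constructions of `A_α`-cospectral pairs from subdivision-edge joins.
(1) Joining two `A_α`-cospectral regular graphs with the same arbitrary graph `H` gives
`A_α`-cospectral graphs.  (2) Joining a regular graph `G` with two `A_α`-cospectral
graphs having equal `A_α`-coronals gives `A_α`-cospectral graphs. -/
theorem Aalpha_cospectral_subdivisionEdgeJoin
    (α : ℝ) (hα : α ∈ Set.Icc (0 : ℝ) 1) :
    (∀ (n₁ n₂ k r₁ r₂ : ℕ) (G₁ : SimpleGraph (Fin n₁)) (G₂ : SimpleGraph (Fin n₂))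
        (H : SimpleGraph (Fin k)),
      G₁.IsRegularOfDegree r₁ → G₂.IsRegularOfDegree r₂ →
      (Aalpha G₁ α).charpoly = (Aalpha G₂ α).charpoly →
      (Aalpha (subdivisionEdgeJoin G₁ H) α).charpoly =
        (Aalpha (subdivisionEdgeJoin G₂ H) α).charpoly) ∧
    (∀ (n k₁ k₂ r : ℕ) (G : SimpleGraph (Fin n)) (H₁ : SimpleGraph (Fin k₁))
        (H₂ : SimpleGraph (Fin k₂)),
      G.IsRegularOfDegree r →
      (Aalpha H₁ α).charpoly = (Aalpha H₂ α).charpoly →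
      (∀ x : ℝ, coronal (Aalpha H₁ α) x = coronal (Aalpha H₂ α) x) →
      (Aalpha (subdivisionEdgeJoin G H₁) α).charpoly =
        (Aalpha (subdivisionEdgeJoin G H₂) α).charpoly) := by
  refine ⟨?_, ?_⟩
  · intro n₁ n₂ k r₁ r₂ G₁ G₂ H h₁ h₂ h
    obtain rfl := eq_of_charpoly_eq_fin h
    rcases Nat.eq_zero_or_pos n₁ with rfl | hn
    · obtain rfl : G₁ = G₂ := by
        ext v
        exact v.elim0
      rfl
    have : Nonempty (Fin n₁) := ⟨⟨0, hn⟩⟩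
    obtain rfl := degree_eq_of_Aalpha_charpoly_eq h₁ h₂ hα.2 h
    have hm : (Fintype.card G₁.edgeSet : ℝ) = Fintype.card G₂.edgeSet := by
      linarith [card_mul_degree_eq_two_mul_card_edges G₁ h₁,
        card_mul_degree_eq_two_mul_card_edges G₂ h₂]
    refine charpoly_eq_of_det_eq_of_eval_ne_zero
      (nondegeneracyPoly α (α * (2 + Fintype.card (Fin k))) r₁)
      (nondegeneracyPoly_ne_zero _ _ _) fun x hx => ?_
    obtain ⟨ha, ht⟩ := ne_zero_of_eval_nondegeneracyPoly hx
    rw [det_smul_one_sub_Aalpha_subdivisionEdgeJoin G₁ H h₁ α x _ _ _ rfl rfl rfl ha ht,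
      det_smul_one_sub_Aalpha_subdivisionEdgeJoin G₂ H h₂ α x _ _ _ rfl rfl rfl ha ht, hm,
      Nat.cast_injective hm, smul_one_sub_smul_adjMatrix_eq G₁ h₁,
      smul_one_sub_smul_adjMatrix_eq G₂ h₂, det_smul_one_sub_smul_eq_of_charpoly_eq h]
  · intro n k₁ k₂ r G H₁ H₂ hG h hΓ
    obtain rfl := eq_of_charpoly_eq_fin h
    refine charpoly_eq_of_det_eq_of_eval_ne_zero
      (nondegeneracyPoly α (α * (2 + Fintype.card (Fin k₁))) r *
        (Aalpha H₁ α).charpoly.comp (X - C (α * Fintype.card G.edgeSet)))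
      (mul_ne_zero (nondegeneracyPoly_ne_zero _ _ _)
        ((charpoly_monic _).comp_X_sub_C _).ne_zero) fun x hx => ?_
    rw [eval_mul, mul_ne_zero_iff, eval_comp, eval_sub, eval_X, eval_C] at hx
    obtain ⟨ha, ht⟩ := ne_zero_of_eval_nondegeneracyPoly hx.1
    have hy := congrArg (eval (x - α * Fintype.card G.edgeSet)) h
    have hy₁ := hx.2
    rw [eval_charpoly_eq_det_smul, eval_charpoly_eq_det_smul] at hy
    rw [eval_charpoly_eq_det_smul] at hy₁
    rw [det_smul_one_sub_Aalpha_subdivisionEdgeJoin G H₁ hG α x _ _ _ rfl rfl rfl ha ht,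
      det_smul_one_sub_Aalpha_subdivisionEdgeJoin G H₂ hG α x _ _ _ rfl rfl rfl ha ht,
      det_sub_smul_const _ _ _ hy₁, det_sub_smul_const _ _ _ (hy ▸ hy₁), hΓ, hy]
end
end

section
/- Let G₁ be an r₁-regular graph on n₁ vertices and m₁ edges, let p,q ≥ 1 be integers, let G₂ = K_{p,q}, and let α ∈ [0,1]. (1) If r₁ = 1, then the A_α-spectrum of the R-vertex join G₁⟨v⟩G₂ consists precisely of: α(3+p+q) − 1; α(2+p) repeated q−1 times; α(2+q) repeated p−1 times; and the four roots of F(x) = (x² − (3α+αp+αq+1)x + 2α²p + 2α²q + 6α − 2)·(x² − (4α+αp+αq)x + 4α² + 2α²p + 2α²q + 2αpq − pq) − 2(1−α)²(x−2α)((x−2α)(p+q) − α(p+q)² + 2pq). (2) If r₁ ≥ 2, then the A_α-spectrum of G₁⟨v⟩G₂ consists precisely of: 2α repeated m₁−n₁ times; α(n₁+p) repeated q−1 times; α(n₁+q) repeated p−1 times; the two roots of G_i(x) = x² − (2α+αr₁+αp+αq+λ_i(A_α(G₁)))x + 2α²p + 2α²q + 3αr₁ − r₁ + (3α−1)λ_i(A_α(G₁))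 for each i = 2,…,n₁; and the four roots of F(x) = (x² − (2α+αr₁+αp+αq+r₁)x + 2α²p + 2α²q + 6αr₁ − 2r₁)·(x² − (2αn₁+αp+αq)x + α²n₁² + α²n₁p + α²n₁q + 2αpq − pq) − n₁(1−α)²(x−2α)((x−αn₁)(p+q) − α(p+q)² + 2pq). -/
open Matrix Polynomial
open scoped Classical

noncomputable section

/-- The `R`-vertex join `G₁⟨v⟩G₂`: take the `R`-graph `R(G₁)` (for each edge of `G₁` a
new vertex joined to both of its endpoints) together with `G₂`, and join every original
vertex of `G₁` with every vertex of `G₂`. -/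
def rVertexJoin {V₁ V₂ : Type*} (G₁ : SimpleGraph V₁) (G₂ : SimpleGraph V₂) :
    SimpleGraph (V₁ ⊕ (↥G₁.edgeSet ⊕ V₂)) :=
  SimpleGraph.fromRel fun a b =>
    match a, b with
    | Sum.inl v, Sum.inl w => G₁.Adj v w
    | Sum.inl v, Sum.inr (Sum.inl e) => v ∈ (e : Sym2 V₁)
    | Sum.inl _, Sum.inr (Sum.inr _) => True
    | Sum.inr (Sum.inr u), Sum.inr (Sum.inr w) => G₂.Adj u w
    | _, _ => False

lemma Aalpha_apply {V : Type*} [Fintype V] [DecidableEq V] (G : SimpleGraph V) (α : ℝ) (v w : V) :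
    Aalpha G α v w =
      α * (if v = w then (G.degree v : ℝ) else 0) + (1 - α) * (if G.Adj v w then 1 else 0) := by
  simp [Aalpha, Matrix.diagonal_apply, SimpleGraph.adjMatrix_apply]

lemma degree_eq_sum_adj {V : Type*} [Fintype V] (G : SimpleGraph V) (v : V) :
    (G.degree v : ℝ) = ∑ w, if G.Adj v w then (1 : ℝ) else 0 := by
  simp [SimpleGraph.degree, SimpleGraph.neighborFinset_eq_filter]

/-- The Schur complement formula for a determinant, without invertibility of the corner. -/
lemma det_fromBlocks_mul_right {m n R : Type*} [Fintype m] [Fintype n] [DecidableEq m]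
    [DecidableEq n] [CommRing R] (A : Matrix m m R) (B : Matrix m n R) (D : Matrix n n R)
    (Y : Matrix n m R) :
    (fromBlocks A B (D * Y) D).det = D.det * (A - B * Y).det := by
  have h : fromBlocks A B (D * Y) D = fromBlocks (A - B * Y) B 0 D * fromBlocks 1 0 Y 1 := by
    simp [fromBlocks_multiply]
  rw [h, det_mul, det_fromBlocks_zero₂₁, det_fromBlocks_zero₁₂]
  simp [mul_comm]

/-- The matrix with all entries equal to `c`. -/
def constMatrix (m n : Type*) {K : Type*} (c : K) : Matrix m n K := of fun _ _ => c

@[simp]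
lemma constMatrix_apply {m n K : Type*} (c : K) (i : m) (j : n) : constMatrix m n c i j = c := rfl

lemma det_sub_constMatrix {V K : Type*} [Fintype V] [DecidableEq V] [Field K] (M : Matrix V V K)
    (s c : K) (hs : s ≠ 0) (hM : ∀ v, ∑ w, M v w = s) :
    (M - constMatrix V V c).det = M.det * (1 - c * Fintype.card V / s) := by
  have h : M - constMatrix V V c =
      M * (1 + replicateCol Unit (fun _ : V => -(c / s)) *
        replicateRow Unit (fun _ : V => (1 : K))) := by
    rw [mul_add, mul_one, sub_eq_add_neg]
    congr 1
    ext v w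
    simp [mul_apply, ← Finset.sum_mul, hM]
    field_simp
  rw [h, det_mul, det_one_add_replicateCol_mul_replicateRow]
  congr 1
  simp [dotProduct]
  ring

lemma det_smul_one_sub_constMatrix {V K : Type*} [Fintype V] [DecidableEq V] [Field K]
    (s c : K) (hs : s ≠ 0) :
    (s • (1 : Matrix V V K) - constMatrix V V c).det =
      s ^ Fintype.card V * (1 - c * Fintype.card V / s) := by
  rw [det_sub_constMatrix _ s c hs]
  · simp
  · intro v
    simp [Matrix.one_apply]

/-- The matrix `x - A_α` of the part `K_{p,q}` of the join, with `a` and `b` the diagonal values. -/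
def bipartiteBlock (p q : ℕ) (a b c : ℝ) : Matrix (Fin p ⊕ Fin q) (Fin p ⊕ Fin q) ℝ :=
  fromBlocks (a • 1) (constMatrix _ _ (-c)) (constMatrix _ _ (-c)) (b • 1)

lemma det_bipartiteBlock {p q : ℕ} (hp : 1 ≤ p) (hq : 1 ≤ q) (a b c : ℝ) (ha : a ≠ 0)
    (hb : b ≠ 0) :
    (bipartiteBlock p q a b c).det =
      b ^ (q - 1) * a ^ (p - 1) * (a * b - c ^ 2 * p * q) := by
  have h : bipartiteBlock p q a b c = fromBlocks (a • 1) (constMatrix (Fin p) (Fin q) (-c))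
      ((b • (1 : Matrix (Fin q) (Fin q) ℝ)) * constMatrix (Fin q) (Fin p) (-c / b)) (b • 1) := by
    unfold bipartiteBlock
    congr 1
    ext i j
    simp
    field_simp
  have h2 : a • (1 : Matrix (Fin p) (Fin p) ℝ) -
      constMatrix (Fin p) (Fin q) (-c) * constMatrix (Fin q) (Fin p) (-c / b) =
      a • 1 - constMatrix _ _ (c ^ 2 * q / b) := by
    ext i j
    simp [mul_apply]
    field_simp
    ring
  rw [h, det_fromBlocks_mul_right, h2, det_smul_one_sub_constMatrix _ _ ha]
  obtain ⟨p, rfl⟩ := Nat.exists_eq_add_of_le' hp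
  obtain ⟨q, rfl⟩ := Nat.exists_eq_add_of_le' hq
  simp
  field_simp
  ring

section Join

variable {V : Type*} [Fintype V] [DecidableEq V]

/-- The block of `x - A_α` between the old vertices of `G₁` and the other vertices of the join. -/
def joinBlock (G₁ : SimpleGraph V) (p q : ℕ) (c : ℝ) :
    Matrix V (↥G₁.edgeSet ⊕ (Fin p ⊕ Fin q)) ℝ :=
  fromCols (of fun v e => if v ∈ (e : Sym2 V) then -c else 0) (constMatrix _ _ (-c))

/-- The block of `x - A_α` on the vertices of the join outside `G₁`. -/
def joinCorner (G₁ : SimpleGraph V) (p q : ℕ) (t a b c : ℝ) :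
    Matrix (↥G₁.edgeSet ⊕ (Fin p ⊕ Fin q)) (↥G₁.edgeSet ⊕ (Fin p ⊕ Fin q)) ℝ :=
  fromBlocks (t • 1) 0 0 (bipartiteBlock p q a b c)

lemma sum_mem_edge (G₁ : SimpleGraph V) (e : G₁.edgeSet) :
    ∑ v, (if v ∈ (e : Sym2 V) then (1 : ℝ) else 0) = 2 := by
  have := G₁.sum_incMatrix_apply_of_mem_edgeSet (R := ℝ) e.2
  rw [← this]
  refine Finset.sum_congr rfl fun v _ => ?_
  simp [SimpleGraph.incMatrix_apply', SimpleGraph.incidenceSet]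

lemma sum_edge_mem_mem (G₁ : SimpleGraph V) (v w : V) :
    ∑ e : G₁.edgeSet, (if v ∈ (e : Sym2 V) then (1 : ℝ) else 0) *
        (if w ∈ (e : Sym2 V) then 1 else 0) =
      (if v = w then (G₁.degree v : ℝ) else 0) + (if G₁.Adj v w then 1 else 0) := by
  have h := congrFun (congrFun (G₁.incMatrix_mul_transpose (R := ℝ)) v) w
  rw [mul_apply] at h
  have h1 : ∑ e : G₁.edgeSet, (if v ∈ (e : Sym2 V) then (1 : ℝ) else 0) *
        (if w ∈ (e : Sym2 V) then 1 else 0) =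
      ∑ e : Sym2 V, G₁.incMatrix ℝ v e * (G₁.incMatrix ℝ)ᵀ e w := by
    have h2 : ∀ e : Sym2 V, G₁.incMatrix ℝ v e * (G₁.incMatrix ℝ)ᵀ e w =
        if e ∈ G₁.edgeSet then (if v ∈ e then (1 : ℝ) else 0) *
          (if w ∈ e then 1 else 0) else 0 := by
      intro e
      by_cases he : e ∈ G₁.edgeSet <;>
        simp [SimpleGraph.incMatrix_apply', SimpleGraph.incidenceSet, he]
    simp_rw [h2]
    rw [← Finset.sum_filter]
    exact (Finset.sum_subtype (p := (· ∈ G₁.edgeSet)) (Finset.univ.filter (· ∈ G₁.edgeSet))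
      (by simp) fun e => (if v ∈ e then (1 : ℝ) else 0) * (if w ∈ e then 1 else 0)).symm
  rw [h1, h]
  by_cases hvw : v = w
  · subst hvw
    simp
  · simp [hvw]

lemma sum_edge_mem (G₁ : SimpleGraph V) (v : V) :
    ∑ e : G₁.edgeSet, (if v ∈ (e : Sym2 V) then (1 : ℝ) else 0) = G₁.degree v := by
  have h := sum_edge_mem_mem G₁ v v
  rw [if_pos rfl, if_neg G₁.irrefl, add_zero] at h
  rw [← h]
  exact Finset.sum_congr rfl fun e _ => by by_cases hv : v ∈ (e : Sym2 V) <;> simp [hv]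

lemma scalar_sub_Aalpha_rVertexJoin (G₁ : SimpleGraph V) {r p q : ℕ}
    (hreg : G₁.IsRegularOfDegree r) (α x : ℝ) :
    scalar _ x - Aalpha (rVertexJoin G₁ (completeBipartiteGraph (Fin p) (Fin q))) α =
      fromBlocks ((x - α * (r + p + q)) • 1 - Aalpha G₁ α) (joinBlock G₁ p q (1 - α))
        (joinBlock G₁ p q (1 - α))ᵀ
        (joinCorner G₁ p q (x - 2 * α) (x - α * (Fintype.card V + q))
          (x - α * (Fintype.card V + p)) (1 - α)) := by
  have hr : ∀ v, ∑ w, (if G₁.Adj v w then (1 : ℝ) else 0) = r := fun v => by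
    rw [← degree_eq_sum_adj, hreg.degree_eq]
  have hr2 : ∀ v, ∑ e : G₁.edgeSet, (if v ∈ (e : Sym2 V) then (1 : ℝ) else 0) = r := fun v => by
    rw [sum_edge_mem, hreg.degree_eq]
  have hvv : ∀ v w, (rVertexJoin G₁ (completeBipartiteGraph (Fin p) (Fin q))).Adj
      (.inl v) (.inl w) ↔ G₁.Adj v w := fun v w => by
    simpa [rVertexJoin, G₁.adj_comm w v] using fun h => h.ne
  have hve : ∀ v e, (rVertexJoin G₁ (completeBipartiteGraph (Fin p) (Fin q))).Adj
      (.inl v) (.inr (.inl e)) ↔ v ∈ (e : Sym2 V) := fun v e => by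
    simp [rVertexJoin]
  have hev : ∀ v e, (rVertexJoin G₁ (completeBipartiteGraph (Fin p) (Fin q))).Adj
      (.inr (.inl e)) (.inl v) ↔ v ∈ (e : Sym2 V) := fun v e => by
    simp [rVertexJoin]
  have hvu : ∀ v u, (rVertexJoin G₁ (completeBipartiteGraph (Fin p) (Fin q))).Adj
      (.inl v) (.inr (.inr u)) := fun v e => by
    simp [rVertexJoin]
  have huv : ∀ v u, (rVertexJoin G₁ (completeBipartiteGraph (Fin p) (Fin q))).Adj
      (.inr (.inr u)) (.inl v) := fun v e => by
    simp [rVertexJoin]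
  have hee : ∀ e f, ¬ (rVertexJoin G₁ (completeBipartiteGraph (Fin p) (Fin q))).Adj
      (.inr (.inl e)) (.inr (.inl f)) := fun v e => by
    simp [rVertexJoin]
  have heu : ∀ e f, ¬ (rVertexJoin G₁ (completeBipartiteGraph (Fin p) (Fin q))).Adj
      (.inr (.inl e)) (.inr (.inr f)) := fun v e => by
    simp [rVertexJoin]
  have hue : ∀ e f, ¬ (rVertexJoin G₁ (completeBipartiteGraph (Fin p) (Fin q))).Adj
      (.inr (.inr f)) (.inr (.inl e)) := fun v e => by
    simp [rVertexJoin]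
  have huu : ∀ t u, (rVertexJoin G₁ (completeBipartiteGraph (Fin p) (Fin q))).Adj
      (.inr (.inr t)) (.inr (.inr u)) ↔ (completeBipartiteGraph (Fin p) (Fin q)).Adj t u := by
    rintro (t | t) (u | u) <;> simp [rVertexJoin]
  ext (v | e | u | u) (w | f | t | t)
  all_goals
    simp only [Matrix.sub_apply, Aalpha_apply, degree_eq_sum_adj, Fintype.sum_sum_type,
      fromBlocks_apply₁₁, fromBlocks_apply₁₂, fromBlocks_apply₂₁, fromBlocks_apply₂₂,
      scalar_apply, diagonal_apply, hvv, hve, hev, hvu, huv, hee, heu, hue, huu, hr, hr2,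
      sum_mem_edge]
    simp [joinBlock, joinCorner, bipartiteBlock, Matrix.one_apply]
  all_goals try split_ifs
  all_goals try ring

/-- The columns that solve a linear system with the non-`V` part of `x - A_α`. -/
def joinSolution (G₁ : SimpleGraph V) (p q : ℕ) (u y z : ℝ) :
    Matrix (↥G₁.edgeSet ⊕ (Fin p ⊕ Fin q)) V ℝ :=
  fromRows (of fun e v => if v ∈ (e : Sym2 V) then u else 0)
    (fromRows (constMatrix _ _ y) (constMatrix _ _ z))

lemma joinBlock_transpose (G₁ : SimpleGraph V) (p q : ℕ) {t a b c Q : ℝ} (ht : t ≠ 0)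
    (hQ : Q ≠ 0) (hQ_eq : a * b - c ^ 2 * p * q = Q) :
    (joinBlock G₁ p q c)ᵀ = joinCorner G₁ p q t a b c *
      joinSolution G₁ p q (-c / t) (-c * (b + c * q) / Q) (-c * (a + c * p) / Q) := by
  rw [joinCorner, joinSolution, bipartiteBlock, fromBlocks_mul_fromRows, fromBlocks_mul_fromRows]
  ext (e | u | u) v
  · simp [joinBlock]
    field_simp
  · simp [joinBlock, mul_apply]
    field_simp
    linear_combination c * hQ_eq
  · simp [joinBlock, mul_apply]
    field_simp
    linear_combination c * hQ_eq

lemma joinBlock_mul (G₁ : SimpleGraph V) {r p q : ℕ} (hreg : G₁.IsRegularOfDegree r)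
    {t c y z : ℝ} :
    joinBlock G₁ p q c * joinSolution G₁ p q (-c / t) y z =
      (c ^ 2 / t) • ((r : ℝ) • 1 + G₁.adjMatrix ℝ) - constMatrix V V (c * (p * y + q * z)) := by
  rw [joinBlock, joinSolution, fromCols_mul_fromRows]
  ext v w
  have h := sum_edge_mem_mem G₁ v w
  rw [hreg.degree_eq] at h
  have h2 : ((of fun v (e : G₁.edgeSet) => if v ∈ (e : Sym2 V) then -c else 0) *
      (of fun (e : G₁.edgeSet) v => if v ∈ (e : Sym2 V) then -c / t else 0) : Matrix V V ℝ) v w =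
      (c ^ 2 / t) * ((if v = w then (r : ℝ) else 0) + (if G₁.Adj v w then 1 else 0)) := by
    rw [← h, mul_apply, Finset.mul_sum]
    refine Finset.sum_congr rfl fun e _ => ?_
    simp only [of_apply]
    split_ifs <;> ring
  rw [Matrix.add_apply, h2]
  simp only [mul_apply, constMatrix_apply, Matrix.add_apply,
    Matrix.sub_apply, Matrix.smul_apply, Matrix.one_apply, SimpleGraph.adjMatrix_apply]
  simp
  ring

lemma Aalpha_of_isRegularOfDegree {G₁ : SimpleGraph V} {r : ℕ} (hreg : G₁.IsRegularOfDegree r)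
    (α : ℝ) : Aalpha G₁ α = (α * r) • 1 + (1 - α) • G₁.adjMatrix ℝ := by
  ext v w
  rw [Aalpha_apply, hreg.degree_eq]
  simp [Matrix.one_apply, SimpleGraph.adjMatrix_apply]

lemma sum_Aalpha {G₁ : SimpleGraph V} {r : ℕ} (hreg : G₁.IsRegularOfDegree r) (α : ℝ) (v : V) :
    ∑ w, Aalpha G₁ α v w = r := by
  simp_rw [Aalpha_apply]
  rw [Finset.sum_add_distrib, ← Finset.mul_sum, ← Finset.mul_sum, ← degree_eq_sum_adj,
    hreg.degree_eq]
  simp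
  ring

lemma det_smul_one_sub_smul {M : Matrix V V ℝ} {μ : V → ℝ}
    (hμ : M.charpoly = ∏ i, (X - C (μ i))) (a b : ℝ) (hb : b ≠ 0) :
    (a • (1 : Matrix V V ℝ) - b • M).det = ∏ i, (a - b * μ i) := by
  have h : a • (1 : Matrix V V ℝ) - b • M = b • (scalar V (a / b) - M) := by
    rw [smul_sub]
    congr 1
    ext i j
    simp [Matrix.one_apply, diagonal_apply]
    field_simp
  rw [h, det_smul, ← eval_charpoly, hμ, eval_prod, ← Finset.card_univ, ← Finset.prod_const,
    ← Finset.prod_mul_distrib]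
  refine Finset.prod_congr rfl fun i _ => ?_
  simp only [eval_sub, eval_X, eval_C]
  field_simp

/-- The quadratic factor of the characteristic polynomial belonging to an eigenvalue `μ`. -/
def joinQuadratic (α r p q μ : ℝ) : ℝ[X] :=
  X ^ 2 - C (2 * α + α * r + α * p + α * q + μ) * X
    + C (2 * α ^ 2 * p + 2 * α ^ 2 * q + 3 * α * r - r + (3 * α - 1) * μ)

/-- The characteristic polynomial of the quotient of the part `K_{p,q}` of the join. -/
def bipartiteQuadratic (α n p q : ℝ) : ℝ[X] :=
  X ^ 2 - C (2 * α * n + α * p + α * q) * X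
    + C (α ^ 2 * n ^ 2 + α ^ 2 * n * p + α ^ 2 * n * q + 2 * α * p * q - p * q)

/-- The quartic factor of the characteristic polynomial. -/
def joinQuartic (α r n p q : ℝ) : ℝ[X] :=
  joinQuadratic α r p q r * bipartiteQuadratic α n p q - C (n * (1 - α) ^ 2) * (X - C (2 * α)) *
    (C (p + q) * (X - C (α * n)) - C (α * (p + q) ^ 2) + C (2 * p * q))

lemma X_sq_sub_add_ne_zero (u v : ℝ) : (X ^ 2 - C u * X + C v : ℝ[X]) ≠ 0 := fun h => by
  simpa [coeff_X, coeff_C] using congrArg (fun f => coeff f 2) h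

lemma eval_charpoly_rVertexJoin {G₁ : SimpleGraph V} {r p q : ℕ} (hp : 1 ≤ p) (hq : 1 ≤ q)
    (hreg : G₁.IsRegularOfDegree r) {α : ℝ} {μ : V → ℝ} {i₀ : V}
    (hμ : (Aalpha G₁ α).charpoly = ∏ i, (X - C (μ i))) (hi₀ : μ i₀ = r) (x : ℝ)
    (ht : x - 2 * α ≠ 0) (ht' : x - 2 * α + (1 - α) ≠ 0)
    (ha : x - α * (Fintype.card V + q) ≠ 0) (hb : x - α * (Fintype.card V + p) ≠ 0)
    (hQ : (bipartiteQuadratic α (Fintype.card V) p q).eval x ≠ 0)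
    (hG : (joinQuadratic α r p q r).eval x ≠ 0) :
    (Aalpha (rVertexJoin G₁ (completeBipartiteGraph (Fin p) (Fin q))) α).charpoly.eval x *
        (x - 2 * α) ^ Fintype.card V =
      (x - 2 * α) ^ Fintype.card G₁.edgeSet * (x - α * (Fintype.card V + p)) ^ (q - 1) *
        (x - α * (Fintype.card V + q)) ^ (p - 1) *
        (∏ i ∈ Finset.univ.erase i₀, (joinQuadratic α r p q (μ i)).eval x) *
        (joinQuartic α r (Fintype.card V) p q).eval x := by
  have hM := scalar_sub_Aalpha_rVertexJoin (p := p) (q := q) G₁ hreg α x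
  set n : ℝ := (Fintype.card V : ℝ)
  set t : ℝ := x - 2 * α with ht_def
  set a : ℝ := x - α * (n + q)
  set b : ℝ := x - α * (n + p)
  have hQ_eq : (bipartiteQuadratic α n p q).eval x = a * b - (1 - α) ^ 2 * p * q := by
    simp [bipartiteQuadratic, a, b]
    ring
  rw [hQ_eq] at hQ
  set a' : ℝ := x - α * (r + p + q) - (1 - α) * (1 - 2 * α) * r / t with ha'
  set b' : ℝ := 1 + (1 - α) / t with hb'
  have hb'0 : b' ≠ 0 := by
    have : b' = (t + (1 - α)) / t := by
      rw [hb']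
      field_simp
    rw [this]
    exact div_ne_zero ht' ht
  have hG_eq : ∀ ν, (joinQuadratic α r p q ν).eval x = (a' - b' * ν) * t := by
    intro ν
    rw [ha', hb']
    field_simp
    simp [joinQuadratic, ht_def]
    ring
  rw [hG_eq] at hG
  have hs : a' - b' * r ≠ 0 := left_ne_zero_of_mul hG
  set Q : ℝ := a * b - (1 - α) ^ 2 * p * q
  set S : ℝ := p * b + q * a + 2 * (1 - α) * p * q
  have hblock : (x - α * (r + p + q)) • 1 - Aalpha G₁ α - ((((1 - α) ^ 2 / t) •
      ((r : ℝ) • 1 + G₁.adjMatrix ℝ) - constMatrix V V ((1 - α) *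
        (p * (-(1 - α) * (b + (1 - α) * q) / Q) + q * (-(1 - α) * (a + (1 - α) * p) / Q))))) =
      a' • 1 - b' • Aalpha G₁ α - constMatrix V V ((1 - α) ^ 2 * S / Q) := by
    rw [Aalpha_of_isRegularOfDegree hreg]
    ext v w
    simp only [Matrix.sub_apply, Matrix.add_apply, Matrix.smul_apply, constMatrix_apply,
      smul_eq_mul]
    rw [ha', hb']
    simp only [S]
    field_simp
    ring
  have hsum : ∀ v, ∑ w, (a' • 1 - b' • Aalpha G₁ α) v w = a' - b' * r := by
    intro v
    simp [Finset.sum_sub_distrib, ← Finset.mul_sum, sum_Aalpha hreg, Matrix.one_apply]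
  have hF : (joinQuartic α r n p q).eval x = (a' - b' * r) * t * Q - n * (1 - α) ^ 2 * t * S := by
    rw [joinQuartic]
    simp only [eval_sub, eval_mul, eval_C, eval_X, eval_add, hG_eq, hQ_eq]
    simp only [S, a, b, t]
    ring
  rw [eval_charpoly, hM, joinBlock_transpose G₁ p q ht hQ rfl,
    det_fromBlocks_mul_right, joinBlock_mul G₁ hreg, hblock, det_sub_constMatrix _ _ _ hs hsum,
    joinCorner, det_fromBlocks_zero₂₁, det_bipartiteBlock hp hq _ _ _ ha hb,
    det_smul_one_sub_smul hμ _ _ hb'0, hF, ← Finset.mul_prod_erase _ _ (Finset.mem_univ i₀), hi₀]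
  have hprod : ∏ i ∈ Finset.univ.erase i₀, (joinQuadratic α r p q (μ i)).eval x =
      (∏ i ∈ Finset.univ.erase i₀, (a' - b' * μ i)) * t ^ (Fintype.card V - 1) := by
    simp_rw [hG_eq]
    rw [Finset.prod_mul_distrib]
    simp [Finset.card_erase_of_mem]
  have hpos : t ^ Fintype.card V = t ^ (Fintype.card V - 1) * t := by
    rw [← pow_succ, Nat.sub_add_cancel (Fintype.card_pos_iff.mpr ⟨i₀⟩)]
  rw [hprod, hpos]
  simp only [det_smul, det_one, mul_one]
  change _ * (_ * _ * Q) * _ * _ = _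
  field_simp
  rfl

/-- The characteristic polynomial of the join, multiplied by a power of `X - 2 α`. -/
lemma charpoly_rVertexJoin_mul {G₁ : SimpleGraph V} {r p q : ℕ} (hp : 1 ≤ p) (hq : 1 ≤ q)
    (hreg : G₁.IsRegularOfDegree r) {α : ℝ} {μ : V → ℝ} {i₀ : V}
    (hμ : (Aalpha G₁ α).charpoly = ∏ i, (X - C (μ i))) (hi₀ : μ i₀ = r) :
    (Aalpha (rVertexJoin G₁ (completeBipartiteGraph (Fin p) (Fin q))) α).charpoly *
        (X - C (2 * α)) ^ Fintype.card V =
      (X - C (2 * α)) ^ Fintype.card G₁.edgeSet *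
        (X - C (α * (Fintype.card V + p))) ^ (q - 1) *
        (X - C (α * (Fintype.card V + q))) ^ (p - 1) *
        (∏ i ∈ Finset.univ.erase i₀, joinQuadratic α r p q (μ i)) *
        joinQuartic α r (Fintype.card V) p q := by
  have hP : (X - C (2 * α)) * (X - C (2 * α - (1 - α))) * (X - C (α * (Fintype.card V + q))) *
      (X - C (α * (Fintype.card V + p))) * bipartiteQuadratic α (Fintype.card V) p q *
      joinQuadratic α r p q r ≠ 0 := by
    simp only [mul_ne_zero_iff]
    exact ⟨⟨⟨⟨⟨X_sub_C_ne_zero _, X_sub_C_ne_zero _⟩, X_sub_C_ne_zero _⟩, X_sub_C_ne_zero _⟩,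
      X_sq_sub_add_ne_zero _ _⟩, X_sq_sub_add_ne_zero _ _⟩
  generalize hP_eq : (X - C (2 * α)) * _ * _ * _ * _ * _ = P at hP
  refine mul_left_cancel₀ hP (Polynomial.funext fun x => ?_)
  rw [eval_mul (p := P), eval_mul (p := P)]
  obtain h | h := eq_or_ne (eval x P) 0
  · rw [h, zero_mul, zero_mul]
  congr 1
  simp only [← hP_eq, eval_mul, mul_ne_zero_iff] at h
  obtain ⟨⟨⟨⟨⟨h1, h2⟩, h3⟩, h4⟩, h5⟩, h6⟩ := h
  simp only [eval_sub, eval_X, eval_C] at h1 h2 h3 h4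
  rw [← sub_add] at h2
  have := eval_charpoly_rVertexJoin hp hq hreg hμ hi₀ x h1 h2 h3 h4 h5 h6
  simpa [eval_prod] using this

lemma exists_eq_of_charpoly_Aalpha [Nonempty V] {G₁ : SimpleGraph V} {r : ℕ}
    (hreg : G₁.IsRegularOfDegree r) {α : ℝ} {μ : V → ℝ}
    (hμ : (Aalpha G₁ α).charpoly = ∏ i, (X - C (μ i))) : ∃ i, μ i = r := by
  have h : (scalar V (r : ℝ) - Aalpha G₁ α).det = 0 := by
    refine exists_mulVec_eq_zero_iff.mp ⟨fun _ => 1, fun h => ?_, ?_⟩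
    · simpa using congrFun h (Classical.arbitrary V)
    · ext v
      rw [scalar_apply]
      simp [mulVec, dotProduct, Finset.sum_sub_distrib, sum_Aalpha hreg, diagonal_apply]
  rw [← eval_charpoly, hμ, eval_prod, Finset.prod_eq_zero_iff] at h
  obtain ⟨i, -, hi⟩ := h
  exact ⟨i, by simpa [sub_eq_zero, eq_comm] using hi⟩

lemma le_of_charpoly_Aalpha {G₁ : SimpleGraph V} {r : ℕ} (hreg : G₁.IsRegularOfDegree r) {α : ℝ}
    (hα : α ∈ Set.Icc (0 : ℝ) 1) {μ : V → ℝ}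
    (hμ : (Aalpha G₁ α).charpoly = ∏ i, (X - C (μ i))) (i : V) : μ i ≤ r := by
  have hroot : (Aalpha G₁ α).charpoly.IsRoot (μ i) := by
    rw [hμ, IsRoot.def, eval_prod]
    exact Finset.prod_eq_zero (Finset.mem_univ i) (by simp)
  have hev : Module.End.HasEigenvalue (Matrix.toLin' (Aalpha G₁ α)) (μ i) := by
    rw [Module.End.hasEigenvalue_iff_isRoot_charpoly]
    simpa using hroot
  obtain ⟨k, hk⟩ := eigenvalue_mem_ball hev
  rw [Metric.mem_closedBall, Real.dist_eq] at hk
  have hnn : ∀ j, 0 ≤ Aalpha G₁ α k j := fun j => by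
    rw [Aalpha_apply]
    have := hα.1
    have := sub_nonneg.mpr hα.2
    split_ifs <;> positivity
  have h := (le_abs_self _).trans hk
  simp_rw [Real.norm_eq_abs, abs_of_nonneg (hnn _)] at h
  rw [← sum_Aalpha hreg α k, ← Finset.add_sum_erase _ _ (Finset.mem_univ k)]
  linarith

lemma card_eq_two_of_connected {G₁ : SimpleGraph V} (hconn : G₁.Connected)
    (hreg : G₁.IsRegularOfDegree 1) : Fintype.card V = 2 := by
  obtain ⟨v⟩ := hconn.nonempty
  obtain ⟨w, hvw, hv⟩ := SimpleGraph.degree_eq_one_iff_existsUnique_adj.mp (hreg.degree_eq v)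
  obtain ⟨v', hwv, hw⟩ := SimpleGraph.degree_eq_one_iff_existsUnique_adj.mp (hreg.degree_eq w)
  obtain rfl := hw v hvw.symm
  have hclosed : ∀ a b, G₁.Walk a b → (a = v ∨ a = w) → (b = v ∨ b = w) := by
    intro a b W
    induction W with
    | nil => exact id
    | cons h _ ih =>
      rintro (rfl | rfl)
      · exact ih (.inr (hv _ h))
      · exact ih (.inl (hw _ h))
  have huniv : (Finset.univ : Finset V) = {v, w} := by
    ext u
    obtain ⟨W⟩ := hconn.preconnected v u
    simpa using hclosed v u W (.inl rfl)
  rw [← Finset.card_univ, huniv, Finset.card_pair hvw.ne]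

end Join

lemma card_mul_eq_two_mul_card_edgeSet {V : Type*} [Fintype V] {G₁ : SimpleGraph V} {r : ℕ}
    (hreg : G₁.IsRegularOfDegree r) : Fintype.card V * r = 2 * Fintype.card G₁.edgeSet := by
  have h := G₁.sum_degrees_eq_twice_card_edges
  simp only [hreg.degree_eq, Finset.sum_const, Finset.card_univ, smul_eq_mul] at h
  rw [h, SimpleGraph.edgeFinset_card]

lemma add_eq_of_charpoly_Aalpha {G₁ : SimpleGraph (Fin 2)} (hreg : G₁.IsRegularOfDegree 1) {α : ℝ}
    {μ : Fin 2 → ℝ} (hμ : (Aalpha G₁ α).charpoly = ∏ i, (X - C (μ i))) :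
    μ 0 + μ 1 = 2 * α := by
  rw [charpoly_fin_two, Fin.prod_univ_two] at hμ
  have h0 := congrArg (eval 0) hμ
  have h1 := congrArg (eval 1) hμ
  simp [trace, Aalpha_apply, hreg.degree_eq] at h0 h1
  linarith

/-- Corollary: the `A_α`-spectrum (as the factorization of the `A_α`-characteristic
polynomial) of the `R`-vertex join `G₁⟨v⟩K_{p,q}` of an `r₁`-regular graph `G₁` and the
complete bipartite graph `K_{p,q}`, in the cases `r₁ = 1` and `r₁ ≥ 2`. -/
theorem Aalpha_spectrum_rVertexJoin_completeBipartite
    {n₁ m₁ r₁ p q : ℕ} (hp : 1 ≤ p) (hq : 1 ≤ q)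
    (G₁ : SimpleGraph (Fin n₁))
    (hconn₁ : G₁.Connected) (hreg₁ : G₁.IsRegularOfDegree r₁)
    (hm : Fintype.card G₁.edgeSet = m₁)
    (α : ℝ) (hα : α ∈ Set.Icc (0 : ℝ) 1)
    (μ₁ : Fin n₁ → ℝ) (hμ₁ : Antitone μ₁)
    (hμ₁ch : (Aalpha G₁ α).charpoly = ∏ i, (X - C (μ₁ i))) :
    (r₁ = 1 →
      (Aalpha (rVertexJoin G₁ (completeBipartiteGraph (Fin p) (Fin q))) α).charpoly =
        (X - C (α * (3 + p + q) - 1)) *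
        (X - C (α * (2 + p))) ^ (q - 1) *
        (X - C (α * (2 + q))) ^ (p - 1) *
        ((X ^ 2 - C (3 * α + α * p + α * q + 1) * X
            + C (2 * α ^ 2 * p + 2 * α ^ 2 * q + 6 * α - 2)) *
            (X ^ 2 - C (4 * α + α * p + α * q) * X
              + C (4 * α ^ 2 + 2 * α ^ 2 * p + 2 * α ^ 2 * q + 2 * α * p * q - p * q))
          - C (2 * (1 - α) ^ 2) * (X - C (2 * α)) *
            (C ((p : ℝ) + q) * (X - C (2 * α)) - C (α * ((p : ℝ) + q) ^ 2)
              + C (2 * (p : ℝ) * q)))) ∧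
    (2 ≤ r₁ →
      (Aalpha (rVertexJoin G₁ (completeBipartiteGraph (Fin p) (Fin q))) α).charpoly =
        (X - C (2 * α)) ^ (m₁ - n₁) *
        (X - C (α * (n₁ + p))) ^ (q - 1) *
        (X - C (α * (n₁ + q))) ^ (p - 1) *
        (∏ i ∈ Finset.univ.filter (fun i : Fin n₁ => i.val ≠ 0),
          (X ^ 2 - C (2 * α + α * r₁ + α * p + α * q + μ₁ i) * X
            + C (2 * α ^ 2 * p + 2 * α ^ 2 * q + 3 * α * r₁ - r₁ + (3 * α - 1) * μ₁ i))) *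
        ((X ^ 2 - C (2 * α + α * r₁ + α * p + α * q + r₁) * X
            + C (2 * α ^ 2 * p + 2 * α ^ 2 * q + 6 * α * r₁ - 2 * r₁)) *
            (X ^ 2 - C (2 * α * n₁ + α * p + α * q) * X
              + C (α ^ 2 * n₁ ^ 2 + α ^ 2 * n₁ * p + α ^ 2 * n₁ * q + 2 * α * p * q - p * q))
          - C (n₁ * (1 - α) ^ 2) * (X - C (2 * α)) *
            (C ((p : ℝ) + q) * (X - C (α * n₁)) - C (α * ((p : ℝ) + q) ^ 2)
              + C (2 * (p : ℝ) * q)))) := by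
  have := hconn₁.nonempty
  have hn : 0 < n₁ := Fin.pos_iff_nonempty.mpr this
  let i₀ : Fin n₁ := ⟨0, hn⟩
  have hi₀ : μ₁ i₀ = r₁ := by
    obtain ⟨i, hi⟩ := exists_eq_of_charpoly_Aalpha hreg₁ hμ₁ch
    exact le_antisymm (le_of_charpoly_Aalpha hreg₁ hα hμ₁ch i₀)
      (hi ▸ hμ₁ (Fin.mk_le_of_le_val (Nat.zero_le _)))
  have key := charpoly_rVertexJoin_mul hp hq hreg₁ hμ₁ch hi₀
  have hcard := card_mul_eq_two_mul_card_edgeSet hreg₁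
  rw [hm, Fintype.card_fin] at key hcard
  have hT : (X - C (2 * α) : ℝ[X]) ≠ 0 := X_sub_C_ne_zero _
  constructor
  · rintro rfl
    obtain rfl : n₁ = 2 := by simpa using card_eq_two_of_connected hconn₁ hreg₁
    obtain rfl : m₁ = 1 := by omega
    have hi₁ : μ₁ 1 = 2 * α - 1 := by
      have h := add_eq_of_charpoly_Aalpha hreg₁ hμ₁ch
      rw [show μ₁ 0 = _ from hi₀] at h
      push_cast at h
      linarith
    have herase : Finset.univ.erase i₀ = {1} := by
      ext i
      fin_cases i <;> simp [i₀]
    rw [herase, Finset.prod_singleton, hi₁] at key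
    have hfac : joinQuadratic α (1 : ℕ) p q (2 * α - 1) =
        (X - C (2 * α)) * (X - C (α * (3 + p + q) - 1)) := by
      refine Polynomial.funext fun x => ?_
      simp [joinQuadratic]
      ring
    apply mul_right_cancel₀ (pow_ne_zero 2 hT)
    rw [key, hfac]
    refine Polynomial.funext fun x => ?_
    simp [joinQuartic, joinQuadratic, bipartiteQuadratic]
    ring
  · intro hr
    have hmn : n₁ ≤ m₁ := by nlinarith
    have hfilter : Finset.univ.filter (fun i : Fin n₁ => i.val ≠ 0) = Finset.univ.erase i₀ := by
      ext i
      simp [i₀, Fin.ext_iff]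
    apply mul_right_cancel₀ (pow_ne_zero n₁ hT)
    rw [key, hfilter, ← Nat.sub_add_cancel hmn, pow_add, Nat.add_sub_cancel]
    have hF : joinQuartic α r₁ n₁ p q =
        (X ^ 2 - C (2 * α + α * r₁ + α * p + α * q + r₁) * X
            + C (2 * α ^ 2 * p + 2 * α ^ 2 * q + 6 * α * r₁ - 2 * r₁)) *
            (X ^ 2 - C (2 * α * n₁ + α * p + α * q) * X
              + C (α ^ 2 * n₁ ^ 2 + α ^ 2 * n₁ * p + α ^ 2 * n₁ * q + 2 * α * p * q - p * q))
          - C (n₁ * (1 - α) ^ 2) * (X - C (2 * α)) *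
            (C ((p : ℝ) + q) * (X - C (α * n₁)) - C (α * ((p : ℝ) + q) ^ 2)
              + C (2 * (p : ℝ) * q)) := by
      refine Polynomial.funext fun x => ?_
      simp only [joinQuartic, joinQuadratic, bipartiteQuadratic, eval_sub, eval_add, eval_mul,
        eval_pow, eval_X, eval_C]
      ring
    rw [hF]
    simp only [joinQuadratic]
    ring
end
end
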